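/- Let N ≥ 2 and let σ be a Hermitian N-qubit operator. If the matrix σ − σ̃_A/2 is positive definite, or if the matrix σ̃_A − σ/2 is positive definite, then σ is biseparable across the 1:(N−1) bipartition at qubit 0. -/

import Mathlib

open scoped ComplexOrder

noncomputable section

/-- Separability of an `N`-qubit matrix across the bipartition `X : Xᶜ`. -/
def SepAcross {N : ℕ} (X : Finset (Fin N))
    (σ : Matrix (Fin N → Fin 2) (Fin N → Fin 2) ℂ) : Prop :=
  ∃ (K : ℕ)
    (A : Fin K → Matrix ({i // i ∈ X} → Fin 2) ({i // i ∈ X} → Fin 2) ℂ)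
    (B : Fin K → Matrix ({i // i ∈ Xᶜ} → Fin 2) ({i // i ∈ Xᶜ} → Fin 2) ℂ),
    (∀ k, (A k).PosSemidef) ∧ (∀ k, (B k).PosSemidef) ∧
    ∀ x y, σ x y =
      ∑ k, A k (fun i => x i.1) (fun i => y i.1) * B k (fun i => x i.1) (fun i => y i.1)

/-- Partial transpose with respect to the qubits in `X`. -/
def pt {N : ℕ} (X : Finset (Fin N))
    (σ : Matrix (Fin N → Fin 2) (Fin N → Fin 2) ℂ) :
    Matrix (Fin N → Fin 2) (Fin N → Fin 2) ℂ :=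
  fun x y => σ (fun i => if i ∈ X then y i else x i) (fun i => if i ∈ X then x i else y i)

/-- The Dicke state `|S_k^N⟩`. -/
def dicke (N k : ℕ) : (Fin N → Fin 2) → ℂ :=
  fun x => if (Finset.univ.filter (fun i => x i = 1)).card = k
    then ((Real.sqrt (N.choose k))⁻¹ : ℝ) else 0

/-- The projector onto the symmetric subspace of `N` qubits. -/
def symProj (N : ℕ) : Matrix (Fin N → Fin 2) (Fin N → Fin 2) ℂ :=
  fun x y => ∑ k ∈ Finset.range (N + 1), dicke N k x * star (dicke N k y)

/-- Full separability of an `N`-qubit matrix. -/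
def FullySep {N : ℕ} (σ : Matrix (Fin N → Fin 2) (Fin N → Fin 2) ℂ) : Prop :=
  ∃ (K : ℕ) (A : Fin K → Fin N → Matrix (Fin 2) (Fin 2) ℂ),
    (∀ k i, (A k i).PosSemidef) ∧
    ∀ x y, σ x y = ∑ k, ∏ i, A k i (x i) (y i)

/-- The second Pauli matrix. -/
def pauliY : Matrix (Fin 2) (Fin 2) ℂ := !![0, -Complex.I; Complex.I, 0]

/-- The `N`-qubit operator acting as `σy` on each qubit in `X` and trivially elsewhere. -/
def pauliYat {N : ℕ} (X : Finset (Fin N)) :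
    Matrix (Fin N → Fin 2) (Fin N → Fin 2) ℂ :=
  fun x y => ∏ i, if i ∈ X then pauliY (x i) (y i) else (if x i = y i then 1 else 0)

/-- `(σy@X) · ρ^{T_X} · (σy@X)`. -/
def tildeAt {N : ℕ} (X : Finset (Fin N))
    (ρ : Matrix (Fin N → Fin 2) (Fin N → Fin 2) ℂ) :
    Matrix (Fin N → Fin 2) (Fin N → Fin 2) ℂ :=
  pauliYat X * pt X ρ * pauliYat X

/-- The Hankel matrix `M_l(q)` with entries `q_{i+j+l} / (N choose (i+j+l))`. -/
def hankel (N l : ℕ) (q : ℕ → ℝ) :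
    Matrix (Fin ((N - l) / 2 + 1)) (Fin ((N - l) / 2 + 1)) ℝ :=
  fun i j => q ((i : ℕ) + j + l) / (N.choose ((i : ℕ) + j + l))

/-- The diagonal symmetric state `Σ_k p_k |S_k^N⟩⟨S_k^N|`. -/
def rhoDS (N : ℕ) (p : ℕ → ℝ) : Matrix (Fin N → Fin 2) (Fin N → Fin 2) ℂ :=
  fun x y => ∑ k ∈ Finset.range (N + 1), (p k : ℂ) * dicke N k x * star (dicke N k y)

/-!
For a `2 × 2` matrix, `σy Aᵀ σy = tr A - A`, so `σ̃_A = 1 ⊗ tr_A σ - σ` is the reduction map `R`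
applied to qubit `A`; it is an involution on qubits, and it preserves separability because
`σy Aᵀ σy` is positive semidefinite whenever `A` is.

In any dimension, `τ + 1 ⊗ tr_A τ` is separable for `τ ≥ 0`: measuring the left factor and
re-preparing the vector found there gives the separable operator `∑ᵥ |v⟩⟨v| ⊗ ⟨v|τ|v⟩`, and the
basis vectors together with vectors of random phases form a weighted 2-design, for which this sum
equals `τ + 1 ⊗ tr_A τ`.

If `τ = σ - R σ / 2 ≥ 0`, then `R τ = R σ - σ / 2`, so
`σ = (2/3) (2 τ + R τ) = (2/3) (τ + 1 ⊗ tr_A τ)` is separable. The second hypothesis is the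
first one for `R σ`, and `σ = R (R σ)`.
-/

section Phases

variable {m : Type*}

theorem forall_phase_eq_zero_iff {a b s t : m} :
    (∀ k : m → ZMod 3, k a - k b - k s + k t = 0) ↔ (a = b ∧ s = t) ∨ (a = s ∧ b = t) := by
  classical
  constructor
  · intro h
    have ha := h (Pi.single a 1)
    have hb := h (Pi.single b 1)
    have hs := h (Pi.single s 1)
    simp only [Pi.single_apply] at ha hb hs
    have : (1 : ZMod 3) + 1 ≠ 0 := by decide
    grind
  · rintro (⟨rfl, rfl⟩ | ⟨rfl, rfl⟩) k <;> ring

/-- The vector of cube roots of unity with exponents `k`. Averaging over all `k` imitates averaging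
over independent uniform phases in the fourth moment `sum_phaseVector`; signs would not do, since
they also admit the pairing `a = t`, `b = s`. -/
def phaseVector (k : m → ZMod 3) : m → ℂ := fun a => ZMod.stdAddChar (k a)

theorem sum_phaseVector [Fintype m] [DecidableEq m] (a b s t : m) :
    ∑ k : m → ZMod 3, phaseVector k a * star (phaseVector k b) *
        (star (phaseVector k s) * phaseVector k t) =
      if (a = b ∧ s = t) ∨ (a = s ∧ b = t) then (Fintype.card (m → ZMod 3) : ℂ) else 0 := by
  let ev (i : m) : (m → ZMod 3) →+ ZMod 3 := Pi.evalAddMonoidHom (fun _ => ZMod 3) i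
  let χ : AddChar (m → ZMod 3) ℂ := ZMod.stdAddChar.compAddMonoidHom (ev a - ev b - ev s + ev t)
  have hχ_apply (k : m → ZMod 3) : χ k = phaseVector k a * star (phaseVector k b) *
      (star (phaseVector k s) * phaseVector k t) := by
    simp [χ, ev, phaseVector, sub_eq_add_neg, AddChar.map_add_eq_mul, AddChar.map_neg_eq_conj,
      mul_assoc]
  have hχ : χ = 0 ↔ (a = b ∧ s = t) ∨ (a = s ∧ b = t) := by
    have hχ_one (k : m → ZMod 3) : χ k = 1 ↔ k a - k b - k s + k t = 0 := by
      rw [← AddChar.map_zero_eq_one (ZMod.stdAddChar (N := 3)), ← ZMod.injective_stdAddChar.eq_iff]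
      rfl
    rw [AddChar.eq_zero_iff, ← forall_phase_eq_zero_iff]
    exact forall_congr' hχ_one
  classical
  simp only [← hχ_apply, AddChar.sum_eq_ite, hχ]

end Phases

section Bipartite

open Matrix
open scoped Kronecker

variable {m n : Type*}

/-- The cone of (unnormalised) separable operators on the bipartite space `ℂ^m ⊗ ℂ^n`: the
additive monoid generated by the products of positive semidefinite operators. -/
def separableCone (m n : Type*) : AddSubmonoid (Matrix (m × n) (m × n) ℂ) :=
  AddSubmonoid.closure
    {σ | ∃ (A : Matrix m m ℂ) (B : Matrix n n ℂ), A.PosSemidef ∧ B.PosSemidef ∧ A ⊗ₖ B = σ}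

theorem kronecker_mem_separableCone {A : Matrix m m ℂ} {B : Matrix n n ℂ}
    (hA : A.PosSemidef) (hB : B.PosSemidef) : A ⊗ₖ B ∈ separableCone m n :=
  AddSubmonoid.subset_closure ⟨A, B, hA, hB, rfl⟩

theorem map_mem_separableCone {m' n' : Type*}
    (f : Matrix (m × n) (m × n) ℂ →+ Matrix (m' × n') (m' × n') ℂ)
    (hf : ∀ A B, A.PosSemidef → B.PosSemidef → f (A ⊗ₖ B) ∈ separableCone m' n')
    {σ : Matrix (m × n) (m × n) ℂ} (hσ : σ ∈ separableCone m n) :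
    f σ ∈ separableCone m' n' := by
  suffices h : separableCone m n ≤ (separableCone m' n').comap f from h hσ
  refine (AddSubmonoid.closure_le).2 ?_
  rintro _ ⟨A, B, hA, hB, rfl⟩
  exact hf A B hA hB

theorem smul_mem_separableCone {c : ℂ} (hc : 0 ≤ c) {σ : Matrix (m × n) (m × n) ℂ}
    (hσ : σ ∈ separableCone m n) : c • σ ∈ separableCone m n := by
  refine map_mem_separableCone (DistribSMul.toAddMonoidHom _ c) (fun A B hA hB => ?_) hσ
  rw [DistribSMul.toAddMonoidHom_apply, ← smul_kronecker]
  exact kronecker_mem_separableCone (hA.smul hc) hB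

theorem exists_eq_sum_kronecker_of_mem_separableCone {σ : Matrix (m × n) (m × n) ℂ}
    (hσ : σ ∈ separableCone m n) :
    ∃ (K : ℕ) (A : Fin K → Matrix m m ℂ) (B : Fin K → Matrix n n ℂ),
      (∀ k, (A k).PosSemidef) ∧ (∀ k, (B k).PosSemidef) ∧ σ = ∑ k, A k ⊗ₖ B k := by
  obtain ⟨terms, hterms, rfl⟩ := AddSubmonoid.exists_list_of_mem_closure hσ
  choose A B hA hB hAB using fun k : Fin terms.length => hterms _ (terms.get_mem k)
  refine ⟨terms.length, A, B, hA, hB, ?_⟩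
  simp only [hAB, List.get_eq_getElem, Fin.sum_univ_getElem]

variable [Fintype m]

/-- The partial trace `tr_A` over the left factor, as a linear map. -/
def partialTraceLeft : Matrix (m × n) (m × n) ℂ →ₗ[ℂ] Matrix n n ℂ where
  toFun τ := of fun b b' => (τ.submatrix (·, b) (·, b')).trace
  map_add' τ τ' := by ext; simp [submatrix_add]
  map_smul' c τ := by ext; simp [submatrix_smul]

theorem partialTraceLeft_apply (τ : Matrix (m × n) (m × n) ℂ) (b b' : n) :
    partialTraceLeft τ b b' = ∑ a, τ (a, b) (a, b') :=
  rfl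

theorem partialTraceLeft_kronecker (A : Matrix m m ℂ) (B : Matrix n n ℂ) :
    partialTraceLeft (A ⊗ₖ B) = A.trace • B := by
  ext b b'
  simp [partialTraceLeft_apply, trace, Finset.sum_mul]

/-- The operator `⟨v|τ|v⟩` on the right factor, i.e. the unnormalised state left there by
finding the left factor in the state `v`. -/
def compressLeft (v : m → ℂ) (τ : Matrix (m × n) (m × n) ℂ) : Matrix n n ℂ :=
  of fun b b' => star v ⬝ᵥ τ.submatrix (·, b) (·, b') *ᵥ v

theorem compressLeft_apply (v : m → ℂ) (τ : Matrix (m × n) (m × n) ℂ) (b b' : n) :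
    compressLeft v τ b b' = ∑ s, ∑ t, star (v s) * v t * τ (s, b) (t, b') := by
  simp only [compressLeft, of_apply, dotProduct, mulVec, Pi.star_apply, submatrix_apply,
    Finset.mul_sum]
  exact Finset.sum_congr rfl fun s _ => Finset.sum_congr rfl fun t _ => by ring

theorem posSemidef_compressLeft [Finite n] (v : m → ℂ) {τ : Matrix (m × n) (m × n) ℂ}
    (hτ : τ.PosSemidef) : (compressLeft v τ).PosSemidef := by
  classical
  cases nonempty_fintype n
  let V : Matrix (m × n) n ℂ := of fun p b => if p.2 = b then v p.1 else 0
  have hV : compressLeft v τ = Vᴴ * τ * V := by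
    ext b b'
    rw [compressLeft_apply, Finset.sum_comm]
    simp [V, mul_apply, Fintype.sum_prod_type, apply_ite star, Finset.sum_mul, mul_right_comm]
  exact hV ▸ hτ.conjTranspose_mul_mul_same V

theorem vecMulVec_kronecker_compressLeft_mem_separableCone [Finite n] (v : m → ℂ)
    {τ : Matrix (m × n) (m × n) ℂ} (hτ : τ.PosSemidef) :
    vecMulVec v (star v) ⊗ₖ compressLeft v τ ∈ separableCone m n :=
  kronecker_mem_separableCone (posSemidef_vecMulVec_self_star v) (posSemidef_compressLeft v hτ)

variable [DecidableEq m]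

theorem sum_single_kronecker_compressLeft_apply (τ : Matrix (m × n) (m × n) ℂ) (a a' : m)
    (b b' : n) :
    (∑ i, vecMulVec (Pi.single i 1) (star (Pi.single i 1)) ⊗ₖ compressLeft (Pi.single i 1) τ)
        (a, b) (a', b') =
      if a = a' then τ (a, b) (a', b') else 0 := by
  have compressLeft_single (i : m) : compressLeft (Pi.single i 1) τ b b' = τ (i, b) (i, b') := by
    simp [compressLeft_apply, Pi.single_apply, apply_ite star]
  simp only [Matrix.sum_apply, kronecker_apply, vecMulVec_apply, compressLeft_single]
  by_cases h : a = a' <;> simp [Pi.single_apply, h]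

theorem sum_phaseVector_kronecker_compressLeft_apply (τ : Matrix (m × n) (m × n) ℂ)
    (a a' : m) (b b' : n) :
    (∑ k : m → ZMod 3, vecMulVec (phaseVector k) (star (phaseVector k)) ⊗ₖ
        compressLeft (phaseVector k) τ) (a, b) (a', b') =
      (Fintype.card (m → ZMod 3) : ℂ) *
        if a = a' then ∑ s, τ (s, b) (s, b') else τ (a, b) (a', b') := by
  calc
    _ = ∑ s, ∑ t, (∑ k : m → ZMod 3, phaseVector k a * star (phaseVector k a') *
          (star (phaseVector k s) * phaseVector k t)) * τ (s, b) (t, b') := by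
      simp only [Matrix.sum_apply, kronecker_apply, vecMulVec_apply, Pi.star_apply,
        compressLeft_apply, Finset.mul_sum, Finset.sum_mul, ← mul_assoc]
      rw [Finset.sum_comm]
      exact Finset.sum_congr rfl fun s _ => Finset.sum_comm
    _ = _ := by
      simp only [sum_phaseVector, ite_mul, zero_mul]
      rcases eq_or_ne a a' with rfl | h
      · have pairing (s t : m) : s = t ∨ (a = s ∧ a = t) ↔ s = t := by grind
        simp [pairing, Finset.mul_sum]
      · simp [h, ite_and]

theorem add_one_kronecker_partialTraceLeft_eq_sum (τ : Matrix (m × n) (m × n) ℂ) :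
    τ + 1 ⊗ₖ partialTraceLeft τ =
      ∑ i, vecMulVec (Pi.single i 1) (star (Pi.single i 1)) ⊗ₖ compressLeft (Pi.single i 1) τ +
      (Fintype.card (m → ZMod 3) : ℂ)⁻¹ • ∑ k : m → ZMod 3,
        vecMulVec (phaseVector k) (star (phaseVector k)) ⊗ₖ compressLeft (phaseVector k) τ := by
  have card_ne_zero : (Fintype.card (m → ZMod 3) : ℂ) ≠ 0 :=
    Nat.cast_ne_zero.2 Fintype.card_ne_zero
  ext ⟨a, b⟩ ⟨a', b'⟩
  rw [Matrix.add_apply, Matrix.add_apply, Matrix.smul_apply, smul_eq_mul,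
    sum_single_kronecker_compressLeft_apply, sum_phaseVector_kronecker_compressLeft_apply,
    inv_mul_cancel_left₀ card_ne_zero, kronecker_apply, partialTraceLeft_apply]
  by_cases h : a = a' <;> simp [one_apply, h]

theorem add_one_kronecker_partialTraceLeft_mem_separableCone [Finite n]
    {τ : Matrix (m × n) (m × n) ℂ} (hτ : τ.PosSemidef) :
    τ + 1 ⊗ₖ partialTraceLeft τ ∈ separableCone m n := by
  rw [add_one_kronecker_partialTraceLeft_eq_sum]
  have mem (v : m → ℂ) := vecMulVec_kronecker_compressLeft_mem_separableCone v hτ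
  exact add_mem (sum_mem fun i _ => mem _)
    (smul_mem_separableCone (by positivity) (sum_mem fun k _ => mem _))

/-- The reduction map `τ ↦ 1 ⊗ tr_A τ - τ`; it is the map `σ ↦ σ̃_A` when the left factor is a
qubit. -/
def reductionLeft : Matrix (m × n) (m × n) ℂ →ₗ[ℂ] Matrix (m × n) (m × n) ℂ where
  toFun τ := 1 ⊗ₖ partialTraceLeft τ - τ
  map_add' τ τ' := by rw [map_add, kronecker_add, add_sub_add_comm]
  map_smul' c τ := by rw [map_smul, kronecker_smul, ← smul_sub, RingHom.id_apply]

theorem reductionLeft_apply (τ : Matrix (m × n) (m × n) ℂ) :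
    reductionLeft τ = 1 ⊗ₖ partialTraceLeft τ - τ :=
  rfl

theorem partialTraceLeft_reductionLeft (τ : Matrix (m × n) (m × n) ℂ) :
    partialTraceLeft (reductionLeft τ) = (Fintype.card m - 1 : ℂ) • partialTraceLeft τ := by
  rw [reductionLeft_apply, map_sub, partialTraceLeft_kronecker, trace_one, sub_smul, one_smul]

theorem reductionLeft_kronecker (A : Matrix m m ℂ) (B : Matrix n n ℂ) :
    reductionLeft (A ⊗ₖ B) = (A.trace • 1 - A) ⊗ₖ B := by
  rw [reductionLeft_apply, partialTraceLeft_kronecker, kronecker_smul, ← smul_kronecker]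
  ext ⟨_, _⟩ ⟨_, _⟩
  simp only [Matrix.sub_apply, kronecker_apply, sub_mul]

end Bipartite

section Qubit

open Matrix
open scoped Kronecker

variable {n : Type*}

theorem isHermitian_pauliY : pauliY.IsHermitian := by
  ext i j
  fin_cases i <;> fin_cases j <;> simp [pauliY]

theorem pauliY_mul_transpose_mul_pauliY (A : Matrix (Fin 2) (Fin 2) ℂ) :
    pauliY * Aᵀ * pauliY = A.trace • 1 - A := by
  ext i j
  simp only [mul_apply, Fin.sum_univ_two, transpose_apply]
  fin_cases i <;> fin_cases j <;> simp [pauliY, trace_fin_two, mul_right_comm _ _ Complex.I]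

theorem posSemidef_trace_smul_one_sub {A : Matrix (Fin 2) (Fin 2) ℂ} (hA : A.PosSemidef) :
    (A.trace • 1 - A).PosSemidef := by
  have h := hA.transpose.conjTranspose_mul_mul_same pauliY
  rwa [isHermitian_pauliY.eq, pauliY_mul_transpose_mul_pauliY] at h

theorem reductionLeft_mem_separableCone {σ : Matrix (Fin 2 × n) (Fin 2 × n) ℂ}
    (hσ : σ ∈ separableCone (Fin 2) n) : reductionLeft σ ∈ separableCone (Fin 2) n := by
  refine map_mem_separableCone reductionLeft.toAddMonoidHom (fun A B hA hB => ?_) hσ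
  rw [LinearMap.toAddMonoidHom_coe, reductionLeft_kronecker]
  exact kronecker_mem_separableCone (posSemidef_trace_smul_one_sub hA) hB

theorem reductionLeft_involutive :
    Function.Involutive (reductionLeft : Matrix (Fin 2 × n) (Fin 2 × n) ℂ →ₗ[ℂ] _) := by
  intro σ
  have h : partialTraceLeft (reductionLeft σ) = partialTraceLeft σ := by
    rw [partialTraceLeft_reductionLeft, Fintype.card_fin]
    norm_num
  rw [reductionLeft_apply, h, reductionLeft_apply, sub_sub_cancel]

theorem mem_separableCone_of_posSemidef_sub_half_reductionLeft [Finite n]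
    {σ : Matrix (Fin 2 × n) (Fin 2 × n) ℂ}
    (h : (σ - (2 : ℂ)⁻¹ • reductionLeft σ).PosSemidef) : σ ∈ separableCone (Fin 2) n := by
  set τ := σ - (2 : ℂ)⁻¹ • reductionLeft σ with hτ
  have hRτ : reductionLeft τ = reductionLeft σ - (2 : ℂ)⁻¹ • σ := by
    rw [hτ, map_sub, map_smul, reductionLeft_involutive]
  have hσ : σ = (2 / 3 : ℂ) • (τ + 1 ⊗ₖ partialTraceLeft τ) := by
    rw [← sub_add_cancel (1 ⊗ₖ partialTraceLeft τ) τ, ← reductionLeft_apply, hRτ, hτ]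
    module
  rw [hσ]
  exact smul_mem_separableCone (by positivity)
    (add_one_kronecker_partialTraceLeft_mem_separableCone h)

theorem mem_separableCone_of_posSemidef_reductionLeft_sub_half [Finite n]
    {σ : Matrix (Fin 2 × n) (Fin 2 × n) ℂ}
    (h : (reductionLeft σ - (2 : ℂ)⁻¹ • σ).PosSemidef) : σ ∈ separableCone (Fin 2) n := by
  rw [← reductionLeft_involutive σ] at h ⊢
  rw [reductionLeft_involutive (reductionLeft σ)] at h
  exact reductionLeft_mem_separableCone (mem_separableCone_of_posSemidef_sub_half_reductionLeft h)

/-- The partial transpose on the left factor of a bipartite operator, the counterpart of `pt`. -/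
def partialTransposeLeft {m : Type*} (τ : Matrix (m × n) (m × n) ℂ) : Matrix (m × n) (m × n) ℂ :=
  of fun p q => τ (q.1, p.2) (p.1, q.2)

theorem pauliY_kronecker_one_mul_partialTransposeLeft_mul [Fintype n] [DecidableEq n]
    (τ : Matrix (Fin 2 × n) (Fin 2 × n) ℂ) :
    (pauliY ⊗ₖ 1) * partialTransposeLeft τ * (pauliY ⊗ₖ 1) = reductionLeft τ := by
  ext ⟨a, b⟩ ⟨a', b'⟩
  have h := congr_fun₂ (pauliY_mul_transpose_mul_pauliY (τ.submatrix (·, b) (·, b'))) a a'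
  have hR : reductionLeft τ (a, b) (a', b') =
      ((τ.submatrix (·, b) (·, b')).trace • 1 - τ.submatrix (·, b) (·, b')) a a' := by
    simp [reductionLeft_apply, partialTraceLeft_apply, trace, mul_comm]
  rw [hR, ← h]
  simp [mul_apply, Fintype.sum_prod_type, partialTransposeLeft, one_apply]

end Qubit

section Register

open Matrix
open scoped Kronecker

variable {N : ℕ}

/-- An `N`-qubit operator regarded as an operator on the tensor product of qubit `o` with the
register of the other qubits. -/
def splitQubit (o : Fin N) :
    Matrix (Fin N → Fin 2) (Fin N → Fin 2) ℂ ≃ₗ[ℂ]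
      Matrix (Fin 2 × ({i // i ≠ o} → Fin 2)) (Fin 2 × ({i // i ≠ o} → Fin 2)) ℂ :=
  reindexLinearEquiv ℂ ℂ (Equiv.funSplitAt o (Fin 2)) (Equiv.funSplitAt o (Fin 2))

theorem splitQubit_apply (o : Fin N) (σ : Matrix (Fin N → Fin 2) (Fin N → Fin 2) ℂ)
    (x y : Fin N → Fin 2) :
    splitQubit o σ (Equiv.funSplitAt o _ x) (Equiv.funSplitAt o _ y) = σ x y := by
  simp only [splitQubit, coe_reindexLinearEquiv, reindex_apply, submatrix_apply,
    Equiv.symm_apply_apply]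

theorem splitQubit_ext {o : Fin N}
    {σ τ : Matrix (Fin 2 × ({i // i ≠ o} → Fin 2)) (Fin 2 × ({i // i ≠ o} → Fin 2)) ℂ}
    (h : ∀ x y : Fin N → Fin 2, σ (Equiv.funSplitAt o _ x) (Equiv.funSplitAt o _ y) =
      τ (Equiv.funSplitAt o _ x) (Equiv.funSplitAt o _ y)) : σ = τ := by
  ext p q
  simpa only [Equiv.apply_symm_apply] using
    h ((Equiv.funSplitAt o _).symm p) ((Equiv.funSplitAt o _).symm q)

theorem splitQubit_mul (o : Fin N) (σ τ : Matrix (Fin N → Fin 2) (Fin N → Fin 2) ℂ) :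
    splitQubit o (σ * τ) = splitQubit o σ * splitQubit o τ :=
  (reindexLinearEquiv_mul ℂ ℂ _ _ _ σ τ).symm

theorem posSemidef_splitQubit (o : Fin N) {σ : Matrix (Fin N → Fin 2) (Fin N → Fin 2) ℂ}
    (hσ : σ.PosSemidef) : (splitQubit o σ).PosSemidef :=
  hσ.submatrix _

theorem splitQubit_pauliYat (o : Fin N) : splitQubit o (pauliYat {o}) = pauliY ⊗ₖ 1 := by
  refine splitQubit_ext fun x y => ?_
  have rest : (∏ i : {i // i ≠ o}, if (i : Fin N) ∈ ({o} : Finset (Fin N)) then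
        pauliY (x i) (y i) else if x i = y i then 1 else 0) =
      if ∀ i : {i // i ≠ o}, x i = y i then (1 : ℂ) else 0 := by
    rw [← Fintype.prod_boole]
    exact Finset.prod_congr rfl fun i _ => if_neg (by simpa using i.2)
  rw [splitQubit_apply, pauliYat, Fintype.prod_eq_mul_prod_subtype_ne _ o, rest]
  simp [one_apply, funext_iff]

theorem splitQubit_pt (o : Fin N) (σ : Matrix (Fin N → Fin 2) (Fin N → Fin 2) ℂ) :
    splitQubit o (pt {o} σ) = partialTransposeLeft (splitQubit o σ) := by
  refine splitQubit_ext fun x y => ?_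
  have swap (x y : Fin N → Fin 2) : Equiv.funSplitAt o _ (fun i => if i ∈ ({o} : Finset _) then
      y i else x i) = (y o, fun i => x i.1) := by
    ext i
    · simp
    · simp [i.2]
  rw [splitQubit_apply, pt, ← splitQubit_apply o σ, swap, swap]
  rfl

theorem splitQubit_tildeAt (o : Fin N) (σ : Matrix (Fin N → Fin 2) (Fin N → Fin 2) ℂ) :
    splitQubit o (tildeAt {o} σ) = reductionLeft (splitQubit o σ) := by
  rw [tildeAt, splitQubit_mul, splitQubit_mul, splitQubit_pauliYat, splitQubit_pt,
    pauliY_kronecker_one_mul_partialTransposeLeft_mul]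

theorem sepAcross_singleton_of_splitQubit_mem {o : Fin N}
    {σ : Matrix (Fin N → Fin 2) (Fin N → Fin 2) ℂ}
    (hσ : splitQubit o σ ∈ separableCone (Fin 2) ({i // i ≠ o} → Fin 2)) : SepAcross {o} σ := by
  obtain ⟨K, A, B, hA, hB, hAB⟩ := exists_eq_sum_kronecker_of_mem_separableCone hσ
  refine ⟨K, fun k => (A k).submatrix (fun a => a ⟨o, by simp⟩) (fun a => a ⟨o, by simp⟩),
    fun k => (B k).submatrix (fun b i => b ⟨i, by simpa using i.2⟩)
      (fun b i => b ⟨i, by simpa using i.2⟩),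
    fun k => (hA k).submatrix _, fun k => (hB k).submatrix _, fun x y => ?_⟩
  rw [← splitQubit_apply o σ, hAB, Matrix.sum_apply]
  rfl

theorem stmt13_general (o : Fin N) (σ : Matrix (Fin N → Fin 2) (Fin N → Fin 2) ℂ)
    (h : (σ - (2 : ℂ)⁻¹ • tildeAt {o} σ).PosSemidef ∨
      (tildeAt {o} σ - (2 : ℂ)⁻¹ • σ).PosSemidef) :
    SepAcross {o} σ := by
  apply sepAcross_singleton_of_splitQubit_mem
  rcases h with h | h <;> replace h := posSemidef_splitQubit o h <;>
    rw [map_sub, map_smul, splitQubit_tildeAt] at h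
  · exact mem_separableCone_of_posSemidef_sub_half_reductionLeft h
  · exact mem_separableCone_of_posSemidef_reductionLeft_sub_half h

end Register

/-- Asymptotic criterion: if `σ - σ̃_A/2 > 0` or `σ̃_A - σ/2 > 0`, then `σ` is
biseparable across the `1:(N-1)` bipartition at qubit `0`. -/
theorem stmt13 (N : ℕ) (hN : 2 ≤ N)
    (σ : Matrix (Fin N → Fin 2) (Fin N → Fin 2) ℂ) (hσ : σ.IsHermitian)
    (h : (σ - (2 : ℂ)⁻¹ • tildeAt {⟨0, by omega⟩} σ).PosDef ∨
         (tildeAt {⟨0, by omega⟩} σ - (2 : ℂ)⁻¹ • σ).PosDef) :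
    SepAcross {⟨0, by omega⟩} σ :=
  stmt13_general _ σ (h.imp (·.posSemidef) (·.posSemidef))
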